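/- Let d ≥ 2. The non-centered Hardy–Littlewood maximal operator M_μ^D associated with the measure μ and the family of open ℓ¹ balls (diamonds) in ℝ^d is not of weak type (1,1) with respect to μ: there is no constant C > 0 such that μ({x ∈ ℝ^d : M_μ^D f(x) > λ}) ≤ C λ⁻¹ ‖f‖_{L¹(dμ)} for all f ∈ L¹(dμ) and all λ > 0. -/

import Mathlib

/-!
In the positive orthant the density `exp (-∑ yᵢ)` is constant on the lower face `{∑ yᵢ = b}` of a
diamond of radius `r`, and the mass of the diamond concentrates near that face: up to dimensional
constants it is `exp (-b) * r ^ (d - 1)`, of which a fixed proportion lies in the slab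
`b < ∑ yᵢ < b + 1`. For `d ≥ 2` one can therefore raise the face by `d - 1` and multiply the radius
by `e` without changing this quantity. This produces arbitrarily many diamonds of comparable mass
with disjoint slabs, so that the mass of their union grows linearly in their number, and for large
radii these diamonds still overlap. Testing the weak type inequality on the indicator function of
their intersection bounds the mass of the union by that of one diamond.
-/

open MeasureTheory ENNReal

/-- The exponential measure `dμ(x) = exp(-|x₁|-⋯-|x_d|) dx` on `ℝ^d`. -/
noncomputable def expMeasure (d : ℕ) : Measure (Fin d → ℝ) :=
  volume.withDensity (fun x => ENNReal.ofReal (Real.exp (-∑ i, |x i|)))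

/-- The family of open ℓ¹ balls (diamonds) in `ℝ^d`. -/
def diamondBalls (d : ℕ) : Set (Set (Fin d → ℝ)) :=
  {B | ∃ (z : Fin d → ℝ) (r : ℝ), 0 < r ∧
    B = {y | ∑ i, |z i - y i| < r}}

/-- The non-centered Hardy–Littlewood maximal operator associated with a measure `μ` and a
family `F` of balls: `M f (x) = sup { (1/μ B) ∫_B |f| dμ : x ∈ B ∈ F, μ B > 0 }`. -/
noncomputable def maximalOp (d : ℕ) (μ : Measure (Fin d → ℝ))
    (F : Set (Set (Fin d → ℝ))) (f : (Fin d → ℝ) → ℝ) (x : Fin d → ℝ) : ℝ≥0∞ :=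
  ⨆ (B : Set (Fin d → ℝ)) (_ : B ∈ F) (_ : x ∈ B) (_ : 0 < μ B),
    (∫⁻ y in B, ENNReal.ofReal |f y| ∂μ) / μ B

/-- The weak type (1,1) inequality with constant `C` for the maximal operator associated with `μ`
and the family of balls `F`. -/
def HasWeakTypeOneOne {d : ℕ} (μ : Measure (Fin d → ℝ)) (F : Set (Set (Fin d → ℝ))) (C : ℝ) :
    Prop :=
  ∀ f : (Fin d → ℝ) → ℝ, Integrable f μ → ∀ lam : ℝ, 0 < lam →
    μ {x | ENNReal.ofReal lam < maximalOp d μ F f x}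
      ≤ ENNReal.ofReal (C / lam) * ∫⁻ x, ENNReal.ofReal |f x| ∂μ

section WeakType

variable {d : ℕ} {μ : Measure (Fin d → ℝ)} {F : Set (Set (Fin d → ℝ))}

lemma ofReal_abs_indicator_one {α : Type*} (Q : Set α) (x : α) :
    ENNReal.ofReal |Q.indicator (fun _ => (1 : ℝ)) x| = Q.indicator 1 x := by
  by_cases hx : x ∈ Q <;> simp [hx]

lemma measure_div_le_maximalOp_indicator {B Q : Set (Fin d → ℝ)} (hB : B ∈ F)
    (hQ : MeasurableSet Q) (hQB : Q ⊆ B) (hQ0 : 0 < μ Q) {x : Fin d → ℝ} (hx : x ∈ B) :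
    μ Q / μ B ≤ maximalOp d μ F (Q.indicator fun _ => 1) x := by
  refine le_iSup₂_of_le B hB (le_iSup₂_of_le hx (hQ0.trans_le (measure_mono hQB)) ?_)
  simp only [ofReal_abs_indicator_one]
  rw [lintegral_indicator_one hQ, Measure.restrict_apply hQ, Set.inter_eq_left.2 hQB]

lemma HasWeakTypeOneOne.measure_iUnion_le {C A : ℝ} (h : HasWeakTypeOneOne μ F C) {ι : Type*}
    {B : ι → Set (Fin d → ℝ)} (hB : ∀ i, B i ∈ F) (hBA : ∀ i, μ (B i) < ENNReal.ofReal A)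
    {Q : Set (Fin d → ℝ)} (hQ : MeasurableSet Q) (hQ0 : 0 < μ Q) (hQB : ∀ i, Q ⊆ B i) :
    μ (⋃ i, B i) ≤ ENNReal.ofReal (C * A) := by
  rcases isEmpty_or_nonempty ι with hι | ⟨⟨i₀⟩⟩
  · simp
  have hA : 0 < A := ENNReal.ofReal_pos.1 (zero_le.trans_lt (hBA i₀))
  have hQ_top : μ Q ≠ ∞ := ((measure_mono (hQB i₀)).trans_lt (hBA i₀)).ne_top
  set m := (μ Q).toReal
  have hm0 : 0 < m := ENNReal.toReal_pos hQ0.ne' hQ_top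
  have hmQ : μ Q = ENNReal.ofReal m := (ENNReal.ofReal_toReal hQ_top).symm
  have hsub : ⋃ i, B i ⊆
      {x | ENNReal.ofReal (m / A) < maximalOp d μ F (Q.indicator fun _ => 1) x} := by
    refine Set.iUnion_subset fun i x hx => ?_
    calc ENNReal.ofReal (m / A) = μ Q / ENNReal.ofReal A := by
          rw [ENNReal.ofReal_div_of_pos hA, hmQ]
      _ < μ Q / μ (B i) := ENNReal.div_lt_div_left hQ0.ne' hQ_top (hBA i)
      _ ≤ _ := measure_div_le_maximalOp_indicator (hB i) hQ (hQB i) hQ0 hx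
  have hf : Integrable (Q.indicator fun _ => (1 : ℝ)) μ :=
    (integrable_indicator_iff hQ).2 (integrableOn_const hQ_top)
  calc μ (⋃ i, B i)
      ≤ ENNReal.ofReal (C / (m / A)) * ∫⁻ x, ENNReal.ofReal |Q.indicator (fun _ => 1) x| ∂μ :=
        (measure_mono hsub).trans (h _ hf _ (div_pos hm0 hA))
    _ = ENNReal.ofReal (C / (m / A)) * ENNReal.ofReal m := by
        simp only [ofReal_abs_indicator_one, lintegral_indicator_one hQ, hmQ]
    _ = ENNReal.ofReal (C * A) := by
        rw [← ENNReal.ofReal_mul' hm0.le]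
        congr 1
        field_simp

lemma card_mul_le_measure_iUnion {α ι : Type*} [MeasurableSpace α] [Fintype ι] {ν : Measure α}
    {E B : ι → Set α} (hE : ∀ i, MeasurableSet (E i)) (hEB : ∀ i, E i ⊆ B i)
    (hdisj : Pairwise (Function.onFun Disjoint E)) {a : ℝ≥0∞} (ha : ∀ i, a ≤ ν (E i)) :
    Fintype.card ι * a ≤ ν (⋃ i, B i) :=
  calc Fintype.card ι * a = ∑ _i : ι, a := by simp
    _ ≤ ∑ i, ν (E i) := Finset.sum_le_sum fun i _ => ha i
    _ = ν (⋃ i, E i) := by rw [measure_iUnion hdisj hE, tsum_fintype]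
    _ ≤ ν (⋃ i, B i) := measure_mono (Set.iUnion_mono hEB)

end WeakType

instance isOpenPosMeasure_expMeasure (d : ℕ) : (expMeasure d).IsOpenPosMeasure :=
  (withDensity_absolutelyContinuous' (Measurable.aemeasurable (by fun_prop))
    (Filter.Eventually.of_forall fun _ =>
      (ENNReal.ofReal_pos.2 (Real.exp_pos _)).ne')).isOpenPosMeasure

section Slicing

variable {n : ℕ}

/-- The coordinates `(y₁, …, yₙ)` and `y₀ + ⋯ + yₙ` on `ℝ^(n+1)`: the density of `expMeasure` on the
positive orthant depends only on the second one. -/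
def tailSum (y : Fin (n + 1) → ℝ) : (Fin n → ℝ) × ℝ := (Fin.tail y, ∑ i, y i)

lemma measurePreserving_tailSum : MeasurePreserving (tailSum (n := n)) := by
  have hshear : MeasurePreserving
      (fun p : (Fin n → ℝ) × ℝ => (p.1, p.2 + ∑ i, p.1 i)) :=
    (MeasurePreserving.id volume).skew_product
      (g := fun (v : Fin n → ℝ) (t : ℝ) => t + ∑ i, v i)
      (by unfold Function.uncurry; fun_prop)
      (Filter.Eventually.of_forall fun v => map_add_right_eq_self volume (∑ i, v i))
  have hsplit := volume_preserving_piFinSuccAbove (fun _ : Fin (n + 1) => ℝ) 0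
  convert hshear.comp (Measure.measurePreserving_swap.comp hsplit) using 1
  ext y
  · simp [tailSum, Fin.tail]
  · simp [tailSum, Fin.sum_univ_succ, Fin.tail]

variable {S : Set (Fin n → ℝ)} {I : Set ℝ}

lemma measurableSet_tailSum_preimage (hS : MeasurableSet S) (hI : MeasurableSet I) :
    MeasurableSet (tailSum ⁻¹' S ×ˢ I) :=
  measurePreserving_tailSum.measurable (hS.prod hI)

lemma setLIntegral_tailSum_preimage (hS : MeasurableSet S) (hI : MeasurableSet I) {g : ℝ → ℝ≥0∞}
    (hg : Measurable g) :
    ∫⁻ y in tailSum ⁻¹' S ×ˢ I, g (∑ i, y i) = volume S * ∫⁻ u in I, g u := by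
  calc ∫⁻ y in tailSum ⁻¹' S ×ˢ I, g (∑ i, y i)
      = ∫⁻ p in S ×ˢ I, g p.2 :=
        measurePreserving_tailSum.setLIntegral_comp_preimage (hS.prod hI) (hg.comp measurable_snd)
    _ = volume S * ∫⁻ u in I, g u := by
        rw [Measure.volume_eq_prod, ← Measure.prod_restrict]
        simpa using lintegral_prod_mul (μ := volume.restrict S) (ν := volume.restrict I)
          (f := fun _ => 1) (g := g) aemeasurable_const hg.aemeasurable

lemma expMeasure_tailSum_preimage_le (hS : MeasurableSet S) (hI : MeasurableSet I) :
    expMeasure (n + 1) (tailSum ⁻¹' S ×ˢ I)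
      ≤ volume S * ∫⁻ u in I, ENNReal.ofReal (Real.exp (-u)) := by
  rw [expMeasure, withDensity_apply _ (measurableSet_tailSum_preimage hS hI),
    ← setLIntegral_tailSum_preimage hS hI (by fun_prop)]
  gcongr with y i
  exact le_abs_self (y i)

lemma expMeasure_tailSum_preimage_of_nonneg (hS : MeasurableSet S) (hI : MeasurableSet I)
    (hnonneg : ∀ y ∈ tailSum ⁻¹' S ×ˢ I, ∀ i, 0 ≤ y i) :
    expMeasure (n + 1) (tailSum ⁻¹' S ×ˢ I)
      = volume S * ∫⁻ u in I, ENNReal.ofReal (Real.exp (-u)) := by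
  have hSI := measurableSet_tailSum_preimage hS hI
  rw [expMeasure, withDensity_apply _ hSI, ← setLIntegral_tailSum_preimage hS hI (by fun_prop)]
  refine setLIntegral_congr_fun hSI fun y hy => ?_
  simp only [abs_of_nonneg (hnonneg y hy _)]

lemma lintegral_Ioi_exp_neg (b : ℝ) :
    ∫⁻ u in Set.Ioi b, ENNReal.ofReal (Real.exp (-u)) = ENNReal.ofReal (Real.exp (-b)) := by
  rw [← ofReal_integral_eq_lintegral_ofReal (integrableOn_exp_neg_Ioi b)
    (Filter.Eventually.of_forall fun u => (Real.exp_pos _).le), integral_exp_neg_Ioi]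

lemma ofReal_exp_le_lintegral_Ioo (b : ℝ) :
    ENNReal.ofReal (Real.exp (-(b + 1)))
      ≤ ∫⁻ u in Set.Ioo b (b + 1), ENNReal.ofReal (Real.exp (-u)) :=
  calc ENNReal.ofReal (Real.exp (-(b + 1)))
      = ∫⁻ _ in Set.Ioo b (b + 1), ENNReal.ofReal (Real.exp (-(b + 1))) := by simp
    _ ≤ _ := setLIntegral_mono (by fun_prop) fun u hu => by gcongr; exact hu.2.le

end Slicing

section Diamond

/-- The open ℓ¹ ball with centre `z` and radius `r`. -/
def diamond {d : ℕ} (z : Fin d → ℝ) (r : ℝ) : Set (Fin d → ℝ) := {y | ∑ i, |z i - y i| < r}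

lemma diamond_mem_diamondBalls {d : ℕ} (z : Fin d → ℝ) {r : ℝ} (hr : 0 < r) :
    diamond z r ∈ diamondBalls d :=
  ⟨z, r, hr, rfl⟩

lemma isOpen_diamond {d : ℕ} (z : Fin d → ℝ) (r : ℝ) : IsOpen (diamond z r) :=
  isOpen_lt (by fun_prop) continuous_const

lemma abs_sub_lt_of_mem_diamond {d : ℕ} {z y : Fin d → ℝ} {r : ℝ} (hy : y ∈ diamond z r)
    (i : Fin d) : |z i - y i| < r :=
  (Finset.single_le_sum (f := fun i => |z i - y i|) (fun _ _ => abs_nonneg _)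
    (Finset.mem_univ i)).trans_lt hy

variable {n : ℕ} {z z' : Fin (n + 1) → ℝ} {r r' : ℝ}

/-- The mass carried by the lower face `{∑ yᵢ = ∑ zᵢ - r}` of `diamond z r` up to a dimensional
factor: the density there times the `n`-dimensional size of the face. -/
noncomputable def faceMass (z : Fin (n + 1) → ℝ) (r : ℝ) : ℝ := Real.exp (-(∑ i, z i - r)) * r ^ n

lemma expMeasure_diamond_le (z : Fin (n + 1) → ℝ) (hr : 0 ≤ r) :
    expMeasure (n + 1) (diamond z r) ≤ ENNReal.ofReal (2 ^ n * faceMass z r) := by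
  set S : Set (Fin n → ℝ) := Set.univ.pi fun i => Set.Ioo (z i.succ - r) (z i.succ + r)
  have hS : MeasurableSet S := MeasurableSet.univ_pi fun _ => measurableSet_Ioo
  have hvol : volume S = ENNReal.ofReal ((2 * r) ^ n) := by
    simp only [S, Real.volume_pi_Ioo, add_sub_sub_cancel, ← two_mul, Finset.prod_const,
      Finset.card_univ, Fintype.card_fin, ENNReal.ofReal_pow (by positivity : 0 ≤ 2 * r)]
  have hsub : diamond z r ⊆ tailSum ⁻¹' S ×ˢ Set.Ioi (∑ i, z i - r) := by
    refine fun y hy => ⟨fun i _ => ?_, ?_⟩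
    · obtain ⟨hlo, hhi⟩ := abs_lt.1 (abs_sub_lt_of_mem_diamond hy i.succ)
      constructor <;> simp only [tailSum, Fin.tail] <;> linarith
    · have hsum : ∑ i, z i - ∑ i, y i < r := by
        rw [← Finset.sum_sub_distrib]
        exact (Finset.sum_le_sum fun i _ => le_abs_self _).trans_lt hy
      exact sub_lt_comm.1 hsum
  calc expMeasure (n + 1) (diamond z r)
      ≤ volume S * ∫⁻ u in Set.Ioi (∑ i, z i - r), ENNReal.ofReal (Real.exp (-u)) :=
        (measure_mono hsub).trans (expMeasure_tailSum_preimage_le hS measurableSet_Ioi)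
    _ = ENNReal.ofReal (2 ^ n * faceMass z r) := by
        rw [hvol, lintegral_Ioi_exp_neg, ← ENNReal.ofReal_mul (by positivity), faceMass]
        ring_nf

/-- The projection to the last `n` coordinates of `faceSlab`. -/
def faceBox (z : Fin (n + 1) → ℝ) (r : ℝ) : Set (Fin n → ℝ) :=
  Set.univ.pi fun i => Set.Ioo (z i.succ - r / (n + 1)) (z i.succ - r / (2 * (n + 1)))

/-- The part of the slab of height `1` above the lower face of `diamond z r` that lies over
`faceBox z r`. The box is chosen so that, for `n + 1 ≤ r`, all coordinates stay below those of
`z`. -/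
def faceSlab (z : Fin (n + 1) → ℝ) (r : ℝ) : Set (Fin (n + 1) → ℝ) :=
  tailSum ⁻¹' faceBox z r ×ˢ Set.Ioo (∑ i, z i - r) (∑ i, z i - r + 1)

lemma measurableSet_faceBox (z : Fin (n + 1) → ℝ) (r : ℝ) : MeasurableSet (faceBox z r) :=
  MeasurableSet.univ_pi fun _ => measurableSet_Ioo

lemma volume_faceBox (z : Fin (n + 1) → ℝ) (hr : 0 ≤ r) :
    volume (faceBox z r) = ENNReal.ofReal ((r / (2 * (n + 1))) ^ n) := by
  have hlen (i : Fin n) : z i.succ - r / (2 * (n + 1)) - (z i.succ - r / (n + 1))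
      = r / (2 * (n + 1)) := by
    field_simp
    ring
  simp only [faceBox, Real.volume_pi_Ioo, hlen, Finset.prod_const, Finset.card_univ,
    Fintype.card_fin, ENNReal.ofReal_pow (by positivity : 0 ≤ r / (2 * ((n : ℝ) + 1)))]

lemma measurableSet_faceSlab (z : Fin (n + 1) → ℝ) (r : ℝ) : MeasurableSet (faceSlab z r) :=
  measurableSet_tailSum_preimage (measurableSet_faceBox z r) measurableSet_Ioo

lemma le_center_of_mem_faceSlab (hr : n + 1 ≤ r) {y : Fin (n + 1) → ℝ} (hy : y ∈ faceSlab z r)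
    (i : Fin (n + 1)) : y i ≤ z i := by
  obtain ⟨hbox, -, htop⟩ := hy
  have hr0 : 0 < r := lt_of_lt_of_le (by positivity) hr
  refine Fin.cases ?_ (fun j => ?_) i
  · have htail : ∑ i : Fin n, (z i.succ - r / (n + 1)) ≤ ∑ i : Fin n, y i.succ :=
      Finset.sum_le_sum fun i _ => (hbox i trivial).1.le
    have hdiv : 1 ≤ r / (n + 1) := (one_le_div (by positivity)).2 hr
    have hsplit : n * (r / (n + 1)) = r - r / (n + 1) := by
      field_simp
      ring
    simp only [tailSum, Fin.sum_univ_succ] at htop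
    simp only [Finset.sum_sub_distrib, Finset.sum_const, Finset.card_univ, Fintype.card_fin,
      nsmul_eq_mul, hsplit] at htail
    linarith
  · exact ((hbox j trivial).2.trans (sub_lt_self _ (by positivity))).le

lemma faceSlab_subset_diamond (hr : n + 1 ≤ r) : faceSlab z r ⊆ diamond z r := by
  intro y hy
  have hle := le_center_of_mem_faceSlab hr hy
  have hbot : ∑ i, z i - r < ∑ i, y i := hy.2.1
  calc ∑ i, |z i - y i| = ∑ i, z i - ∑ i, y i := by
        simp only [abs_of_nonneg (sub_nonneg.2 (hle _)), Finset.sum_sub_distrib]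
    _ < r := sub_lt_comm.1 hbot

lemma le_expMeasure_faceSlab (hr : n + 1 ≤ r) (hz : ∀ i, r ≤ z i) :
    ENNReal.ofReal (Real.exp (-1) / (2 * (n + 1)) ^ n * faceMass z r)
      ≤ expMeasure (n + 1) (faceSlab z r) := by
  have hr0 : 0 ≤ r := le_trans (by positivity) hr
  have hnonneg : ∀ y ∈ faceSlab z r, ∀ i, 0 ≤ y i := fun y hy i => by
    linarith [hz i, (abs_lt.1 (abs_sub_lt_of_mem_diamond (faceSlab_subset_diamond hr hy) i)).2]
  calc ENNReal.ofReal (Real.exp (-1) / (2 * (n + 1)) ^ n * faceMass z r)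
      = volume (faceBox z r) * ENNReal.ofReal (Real.exp (-(∑ i, z i - r + 1))) := by
        rw [volume_faceBox z hr0, ← ENNReal.ofReal_mul (by positivity), faceMass, div_pow,
          neg_add, Real.exp_add]
        ring_nf
    _ ≤ _ := by
        rw [faceSlab, expMeasure_tailSum_preimage_of_nonneg (measurableSet_faceBox z r)
          measurableSet_Ioo hnonneg]
        gcongr
        exact ofReal_exp_le_lintegral_Ioo _

lemma disjoint_faceSlab (h : ∑ i, z i - r + 1 ≤ ∑ i, z' i - r') :
    Disjoint (faceSlab z r) (faceSlab z' r') :=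
  Set.disjoint_left.2 fun _ hy hy' => (hy.2.2.trans_le h).not_gt hy'.2.1

end Diamond

section Tower

variable (n : ℕ) (R σ : ℝ)

/-- The centre, on the diagonal, of the `k`-th diamond of the tower: the diamond of radius
`R * exp k` whose lower face is at height `n * (σ + k)`. -/
noncomputable def towerCenter (k : ℕ) : Fin (n + 1) → ℝ :=
  fun _ => (n * (σ + k) + R * Real.exp k) / (n + 1)

lemma sum_towerCenter (k : ℕ) :
    ∑ i, towerCenter n R σ k i = n * (σ + k) + R * Real.exp k := by
  simp only [towerCenter, Finset.sum_const, Finset.card_univ, Fintype.card_fin, nsmul_eq_mul]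
  push_cast
  field_simp

lemma faceMass_towerCenter (k : ℕ) :
    faceMass (towerCenter n R σ k) (R * Real.exp k) = (R * Real.exp (-σ)) ^ n := by
  have hexp : Real.exp (-(n * (σ + k))) = Real.exp (-(σ + k)) ^ n := by
    rw [← Real.exp_nat_mul, mul_neg]
  rw [faceMass, sum_towerCenter, add_sub_cancel_right, hexp, ← mul_pow, mul_left_comm,
    ← Real.exp_add, neg_add, neg_add_cancel_right]

variable {n R σ}

lemma radius_le_towerCenter {k : ℕ} (hσ : R * Real.exp k ≤ σ) (i : Fin (n + 1)) :
    R * Real.exp k ≤ towerCenter n R σ k i := by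
  have hface : n * (R * Real.exp k) ≤ n * (σ + k) := by
    gcongr
    exact hσ.trans (le_add_of_nonneg_right k.cast_nonneg)
  rw [towerCenter, le_div_iff₀ (by positivity)]
  linarith

/-- Points on the diagonal lie in a diamond centred there as soon as they are strictly between its
lower and its upper face. -/
lemma diagonal_mem_diamond_towerCenter {K k : ℕ} (hn : 1 ≤ n) (hR : n * K < R) (hk : k < K) :
    (fun _ => n * (σ + K) / (n + 1)) ∈ diamond (towerCenter n R σ k) (R * Real.exp k) := by
  have hR0 : 0 ≤ R := le_trans (by positivity) hR.le
  have hlower : (n : ℝ) * k < n * K := by exact_mod_cast Nat.mul_lt_mul_of_pos_left hk hn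
  have hradius : R ≤ R * Real.exp k := le_mul_of_one_le_right hR0 (Real.one_le_exp k.cast_nonneg)
  have hnk : (0 : ℝ) ≤ n * k := by positivity
  calc ∑ i : Fin (n + 1), |towerCenter n R σ k i - n * (σ + K) / (n + 1)|
      = |n * k + R * Real.exp k - n * K| := by
        simp only [towerCenter, Finset.sum_const, Finset.card_univ, Fintype.card_fin,
          nsmul_eq_mul, ← sub_div, abs_div]
        push_cast
        rw [abs_of_pos (by positivity : (0 : ℝ) < n + 1), mul_div_cancel₀ _ (by positivity)]
        ring_nf
    _ < R * Real.exp k := abs_lt.2 ⟨by linarith, by linarith⟩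

lemma measure_iInter_tower_pos {K : ℕ} (hn : 1 ≤ n) (hR : n * K < R) :
    0 < expMeasure (n + 1) (⋂ k : Fin K, diamond (towerCenter n R σ k) (R * Real.exp k)) :=
  (isOpen_iInter_of_finite fun _ => isOpen_diamond _ _).measure_pos _
    ⟨_, Set.mem_iInter.2 fun k => diagonal_mem_diamond_towerCenter hn hR k.2⟩

lemma pairwise_disjoint_tower_faceSlab (hn : 1 ≤ n) (K : ℕ) :
    Pairwise (Function.onFun Disjoint fun k : Fin K =>
      faceSlab (towerCenter n R σ k) (R * Real.exp k)) := by
  refine (pairwise_disjoint_on _).2 fun k l hkl => disjoint_faceSlab ?_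
  have hn' : (1 : ℝ) ≤ n := by exact_mod_cast hn
  have hkl' : (k : ℝ) + 1 ≤ l := by exact_mod_cast hkl
  simp only [sum_towerCenter, add_sub_cancel_right]
  nlinarith

lemma expMeasure_tower_lt (hR : 0 < R) (k : ℕ) :
    expMeasure (n + 1) (diamond (towerCenter n R σ k) (R * Real.exp k))
      < ENNReal.ofReal (2 ^ (n + 1) * (R * Real.exp (-σ)) ^ n) := by
  refine (expMeasure_diamond_le _ (by positivity)).trans_lt ?_
  rw [faceMass_towerCenter]
  exact (ENNReal.ofReal_lt_ofReal_iff (by positivity)).2 (by gcongr <;> simp)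

lemma le_expMeasure_tower_faceSlab {k : ℕ} (hR : n + 1 ≤ R * Real.exp k)
    (hσ : R * Real.exp k ≤ σ) :
    ENNReal.ofReal (Real.exp (-1) / (2 * (n + 1)) ^ n * (R * Real.exp (-σ)) ^ n)
      ≤ expMeasure (n + 1) (faceSlab (towerCenter n R σ k) (R * Real.exp k)) := by
  rw [← faceMass_towerCenter n R σ k]
  exact le_expMeasure_faceSlab hR (radius_le_towerCenter hσ)

lemma HasWeakTypeOneOne.natCast_mul_le {C : ℝ} (hC : 0 ≤ C) (hn : 1 ≤ n)
    (h : HasWeakTypeOneOne (expMeasure (n + 1)) (diamondBalls (n + 1)) C) (K : ℕ) :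
    K * (Real.exp (-1) / (2 * (n + 1)) ^ n) ≤ C * 2 ^ (n + 1) := by
  set c : ℝ := Real.exp (-1) / (2 * (n + 1)) ^ n
  set R : ℝ := n * K + (n + 1)
  set σ : ℝ := R * Real.exp K
  set M : ℝ := (R * Real.exp (-σ)) ^ n
  have hR0 : 0 < R := by positivity
  have hR (k : Fin K) : n + 1 ≤ R * Real.exp k :=
    (le_add_of_nonneg_left (by positivity)).trans
      (le_mul_of_one_le_right hR0.le (Real.one_le_exp (Nat.cast_nonneg _)))
  have hσ (k : Fin K) : R * Real.exp k ≤ σ := by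
    have hkK : ((k : ℕ) : ℝ) ≤ K := by exact_mod_cast k.2.le
    exact mul_le_mul_of_nonneg_left (Real.exp_le_exp.2 hkK) hR0.le
  have hlower := card_mul_le_measure_iUnion (fun _ => measurableSet_faceSlab _ _)
    (fun k => faceSlab_subset_diamond (hR k)) (pairwise_disjoint_tower_faceSlab hn K)
    (fun k => le_expMeasure_tower_faceSlab (hR k) (hσ k))
  have hupper := h.measure_iUnion_le (fun k : Fin K => diamond_mem_diamondBalls _ (by positivity))
    (fun k => expMeasure_tower_lt (σ := σ) hR0 k)
    (MeasurableSet.iInter fun _ => (isOpen_diamond _ _).measurableSet)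
    (measure_iInter_tower_pos hn (lt_add_of_pos_right _ (by positivity))) (Set.iInter_subset _)
  have hbounds : K * (c * M) ≤ C * (2 ^ (n + 1) * M) := by
    rw [← ENNReal.ofReal_le_ofReal_iff (by positivity), ENNReal.ofReal_mul K.cast_nonneg,
      ENNReal.ofReal_natCast]
    simpa only [Fintype.card_fin] using hlower.trans hupper
  rw [← mul_assoc, ← mul_assoc] at hbounds
  exact le_of_mul_le_mul_right hbounds (by positivity)

end Tower

/-- For `d ≥ 2`, the non-centered maximal operator `M_μ^𝓓` associated with the exponential
measure `μ` and the family of open diamonds (ℓ¹ balls) is not of weak type (1,1) w.r.t. `μ`. -/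
theorem diamond_maximal_not_weak_type_one_one (d : ℕ) (hd : 2 ≤ d) :
    ¬ ∃ C : ℝ, 0 < C ∧
      ∀ f : (Fin d → ℝ) → ℝ, Integrable f (expMeasure d) →
        ∀ lam : ℝ, 0 < lam →
          expMeasure d {x | ENNReal.ofReal lam
              < maximalOp d (expMeasure d) (diamondBalls d) f x}
            ≤ ENNReal.ofReal (C / lam) * ∫⁻ x, ENNReal.ofReal |f x| ∂(expMeasure d) := by
  rintro ⟨C, hC, hweak : HasWeakTypeOneOne _ _ C⟩
  obtain ⟨n, rfl⟩ : ∃ n, d = n + 1 := ⟨d - 1, by omega⟩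
  obtain ⟨K, hK⟩ := exists_nat_gt (C * 2 ^ (n + 1) / (Real.exp (-1) / (2 * (n + 1)) ^ n))
  rw [div_lt_iff₀ (by positivity)] at hK
  exact hK.not_ge (hweak.natCast_mul_le hC.le (by omega) K)
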